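/- Let n ≥ 2 and let G be an almost controllable graph on Fin n. Then for δ ∈ {0,1}, det W_δ(G) = (−1)^δ·2^{1−⌊n/2⌋}·ξ(G)ᵀξ(G) ≠ 0; in particular W₀(G) and W₁(G) have rank n (are invertible over ℚ). -/

import Mathlib

/-!
Replacing the last column of the walk matrix `W = [V | A^{n-1}e]` by a vector `v` gives a matrix
whose determinant is `v ⬝ᵥ ξ`, by Laplace expansion along that column
(`det_updateCol_last`). For `v` a multiple of `ξ` this is the determinant formula, and the
determinant is nonzero as soon as `ξ ≠ 0`.

Suppose `ξ = 0`. Then `[V | v]` is singular for every `v`. Since the columns of `V` are too few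
to span `ℚⁿ`, some nonzero `c` satisfies `V c = 0`, i.e. `∑ c_j A^j e = 0`. Multiplying by `A`
shifts the relation, so both `(c, 0)` and `(0, c)` lie in the kernel of `W`. That kernel is a line
because `W` has rank `n - 1`, so the two vectors are proportional, which forces `c = 0`
coordinate by coordinate from the last one downwards (`xiVec_ne_zero`).
-/

open Matrix

namespace AlmostControllableGraphs

variable {n : ℕ}

/-- The all-ones vector. -/
def eVec (m : ℕ) : Fin m → ℤ := fun _ => 1

/-- The walk matrix `W(G) = [e, Ae, A²e, …, A^{n-1}e]` (columns indexed by `Fin (n+2)`). -/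
def walkMatrix (A : Matrix (Fin (n + 2)) (Fin (n + 2)) ℤ) :
    Matrix (Fin (n + 2)) (Fin (n + 2)) ℤ :=
  Matrix.of fun i j => ((A ^ (j : ℕ)) *ᵥ eVec (n + 2)) i

/-- `G` is almost controllable if its walk matrix has rank `n - 1` over `ℚ`. -/
def IsAlmostControllable (A : Matrix (Fin (n + 2)) (Fin (n + 2)) ℤ) : Prop :=
  ((walkMatrix A).map ((↑) : ℤ → ℚ)).rank = n + 1

/-- The matrix `V = [e, Ae, …, A^{n-2}e]`, the first `n - 1` columns of the walk matrix. -/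
def Vmat (A : Matrix (Fin (n + 2)) (Fin (n + 2)) ℤ) :
    Matrix (Fin (n + 2)) (Fin (n + 1)) ℤ :=
  Matrix.of fun i j => walkMatrix A i j.castSucc

/-- The matrix obtained from `V` by deleting row `i`. -/
def Xmat (A : Matrix (Fin (n + 2)) (Fin (n + 2)) ℤ) (i : Fin (n + 2)) :
    Matrix (Fin (n + 1)) (Fin (n + 1)) ℤ :=
  Matrix.of fun r c => Vmat A (i.succAbove r) c

/-- The `(i, n)`-cofactor of the walk matrix: `(−1)^{n+i}` times the determinant of the
matrix obtained by deleting row `i` and the last column from `W(G)`.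
(In 0-based indexing the sign is `(−1)^{i + (n-1)}`.) -/
def cofactorLast (A : Matrix (Fin (n + 2)) (Fin (n + 2)) ℤ) (i : Fin (n + 2)) : ℤ :=
  (-1 : ℤ) ^ ((i : ℕ) + (n + 1)) * (Xmat A i).det

/-- The vector `ξ(G)` of last-column cofactors of the walk matrix. -/
def xiVec (A : Matrix (Fin (n + 2)) (Fin (n + 2)) ℤ) : Fin (n + 2) → ℤ :=
  fun i => cofactorLast A i

/-- The rational scalar `2^{1 - ⌊n/2⌋}`. -/
def twoPow (n : ℕ) : ℚ := (2 : ℚ) ^ ((1 : ℤ) - (((n + 2) / 2 : ℕ) : ℤ))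

/-- The matrix `W_δ(G) = [e, Ae, …, A^{n-2}e, (−1)^δ·2^{1-⌊n/2⌋}·ξ(G)]`. -/
def Wdelta (A : Matrix (Fin (n + 2)) (Fin (n + 2)) ℤ) (δ : ℕ) :
    Matrix (Fin (n + 2)) (Fin (n + 2)) ℚ :=
  Matrix.of fun i j =>
    if (j : ℕ) = n + 1 then (-1 : ℚ) ^ δ * twoPow n * (xiVec A i : ℚ)
    else ((walkMatrix A i j : ℤ) : ℚ)

/-- A matrix is regular orthogonal if it is orthogonal and has all row sums equal to 1. -/
def IsRegularOrthogonal {K : Type*} [Field K] {m : ℕ} (Q : Matrix (Fin m) (Fin m) K) : Prop :=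
  Qᵀ * Q = 1 ∧ Q *ᵥ (fun _ => (1 : K)) = fun _ => 1

/-- Adjacency matrix of the complement graph. -/
def complMat (A : Matrix (Fin (n + 2)) (Fin (n + 2)) ℤ) :
    Matrix (Fin (n + 2)) (Fin (n + 2)) ℤ :=
  Matrix.of fun i j => if i = j then 0 else 1 - A i j

/-- Two graphs are generalized cospectral if they are cospectral and so are their complements. -/
def GenCospectral (A B : Matrix (Fin (n + 2)) (Fin (n + 2)) ℤ) : Prop :=
  A.charpoly = B.charpoly ∧ (complMat A).charpoly = (complMat B).charpoly

/-- `τ` and `τ'` are twins: the transposition swapping them is an automorphism. -/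
def IsTwinPair (A : Matrix (Fin (n + 2)) (Fin (n + 2)) ℤ) (τ τ' : Fin (n + 2)) : Prop :=
  ∀ i j, A (Equiv.swap τ τ' i) (Equiv.swap τ τ' j) = A i j

/-- `λ₁(G) = −1` if the twins are adjacent and `0` otherwise; for a 0-1 matrix this
is `−A τ τ'`. -/
def lam1 (A : Matrix (Fin (n + 2)) (Fin (n + 2)) ℤ) (τ τ' : Fin (n + 2)) : ℤ :=
  -(A τ τ')

/-- The vector `α(G)` with entry `−1` at `τ`, `1` at `τ'`, and `0` elsewhere. -/
def alphaVec (τ τ' : Fin (n + 2)) : Fin (n + 2) → ℤ :=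
  fun i => if i = τ then -1 else if i = τ' then 1 else 0

/-- The reduction of `α(G)` modulo `p`. -/
def alphaVecMod (p : ℕ) (τ τ' : Fin (n + 2)) : Fin (n + 2) → ZMod p :=
  fun i => ((alphaVec τ τ' i : ℤ) : ZMod p)

/-- The matrix `Ŵ(G) = [e, Ae, …, A^{n-2}e, α(G)]`. -/
def hatW (A : Matrix (Fin (n + 2)) (Fin (n + 2)) ℤ) (τ τ' : Fin (n + 2)) :
    Matrix (Fin (n + 2)) (Fin (n + 2)) ℤ :=
  Matrix.of fun i j => if (j : ℕ) = n + 1 then alphaVec τ τ' i else walkMatrix A i j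

/-- The level of a rational matrix: the smallest positive integer `ℓ` such that `ℓQ` is
an integer matrix. -/
noncomputable def level {m : ℕ} (Q : Matrix (Fin m) (Fin m) ℚ) : ℕ :=
  sInf {k : ℕ | 0 < k ∧ ∀ i j, ((k : ℚ) * Q i j).den = 1}

/-- A permutation matrix. -/
def IsPermMatrix {m : ℕ} (Q : Matrix (Fin m) (Fin m) ℚ) : Prop :=
  ∃ σ : Equiv.Perm (Fin m), ∀ i j, Q i j = if σ i = j then 1 else 0

/-- `G` is determined by its generalized spectrum: every graph generalized cospectral with
`G` is isomorphic to `G`. -/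
def IsDGS (A : Matrix (Fin (n + 2)) (Fin (n + 2)) ℤ) : Prop :=
  ∀ B : Matrix (Fin (n + 2)) (Fin (n + 2)) ℤ, B.IsAdjMatrix → GenCospectral A B →
    ∃ σ : Equiv.Perm (Fin (n + 2)), ∀ i j, B i j = A (σ i) (σ j)

/-- The walk matrix over `ℚ`. -/
def walkMatrixQ (A : Matrix (Fin (n + 2)) (Fin (n + 2)) ℤ) :
    Matrix (Fin (n + 2)) (Fin (n + 2)) ℚ :=
  (walkMatrix A).map ((↑) : ℤ → ℚ)

lemma det_updateCol_last (A : Matrix (Fin (n + 2)) (Fin (n + 2)) ℤ) (v : Fin (n + 2) → ℚ) :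
    ((walkMatrixQ A).updateCol (Fin.last (n + 1)) v).det = ∑ i, v i * (xiVec A i : ℚ) := by
  rw [Matrix.det_succ_column _ (Fin.last (n + 1))]
  refine Finset.sum_congr rfl fun i _ => ?_
  have hsub : ((walkMatrixQ A).updateCol (Fin.last (n + 1)) v).submatrix
      i.succAbove (Fin.last (n + 1)).succAbove = (Xmat A i).map ((↑) : ℤ → ℚ) := by
    ext r c
    simp [Fin.succAbove_last, (Fin.castSucc_lt_last c).ne,
      walkMatrixQ, Xmat, Vmat]
  rw [hsub, ← Int.cast_det]
  simp [xiVec, cofactorLast]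
  ring

/-- Each column of the walk matrix is `A` times the previous one. -/
lemma walkMatrixQ_succ (A : Matrix (Fin (n + 2)) (Fin (n + 2)) ℤ) (i : Fin (n + 2))
    (j : Fin (n + 1)) :
    walkMatrixQ A i j.succ = ∑ k, (A i k : ℚ) * walkMatrixQ A k j.castSucc := by
  simp only [walkMatrixQ, walkMatrix, Matrix.map_apply, Matrix.of_apply, Fin.val_succ,
    Fin.val_castSucc]
  rw [pow_succ', ← Matrix.mulVec_mulVec]
  simp [Matrix.mulVec, dotProduct]

/-- If all cofactors along the last column vanish, the first `n - 1` columns are dependent. -/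
lemma exists_relation_of_xiVec_eq_zero (A : Matrix (Fin (n + 2)) (Fin (n + 2)) ℤ)
    (h : xiVec A = 0) :
    ∃ c : Fin (n + 1) → ℚ, c ≠ 0 ∧ ∀ i, ∑ j, walkMatrixQ A i j.castSucc * c j = 0 := by
  by_contra! hno
  let V : Matrix (Fin (n + 2)) (Fin (n + 1)) ℚ := Matrix.of fun i j => walkMatrixQ A i j.castSucc
  have hsurj : Function.Surjective V.mulVecLin := by
    intro v
    have hdet : ((walkMatrixQ A).updateCol (Fin.last (n + 1)) v).det = 0 := by
      rw [det_updateCol_last, h]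
      simp
    obtain ⟨x, hx0, hx⟩ := Matrix.exists_mulVec_eq_zero_iff.mpr hdet
    have hrel : ∀ i, ∑ j : Fin (n + 1), walkMatrixQ A i j.castSucc * x j.castSucc
        + v i * x (Fin.last (n + 1)) = 0 := by
      intro i
      have hi := congrFun hx i
      simpa [Matrix.mulVec, dotProduct, Fin.sum_univ_castSucc, Matrix.updateCol_apply,
        (Fin.castSucc_lt_last _).ne] using hi
    -- A zero last coefficient would give a relation among the columns of `V` alone.
    have ht : x (Fin.last (n + 1)) ≠ 0 := by
      intro ht
      have hc : (fun j : Fin (n + 1) => x j.castSucc) ≠ 0 := by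
        intro hc
        apply hx0
        ext j
        induction j using Fin.lastCases with
        | last => exact ht
        | cast j => exact congrFun hc j
      obtain ⟨i, hi⟩ := hno _ hc
      apply hi
      simpa [ht] using hrel i
    refine ⟨fun j => -(x j.castSucc / x (Fin.last (n + 1))), ?_⟩
    ext i
    have hsum : ∑ j : Fin (n + 1), walkMatrixQ A i j.castSucc *
        -(x j.castSucc / x (Fin.last (n + 1))) =
        -(∑ j : Fin (n + 1), walkMatrixQ A i j.castSucc * x j.castSucc) /
          x (Fin.last (n + 1)) := by
      rw [neg_div, Finset.sum_div, ← Finset.sum_neg_distrib]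
      exact Finset.sum_congr rfl fun j _ => by ring
    simp only [V, Matrix.mulVecLin_apply, Matrix.mulVec, dotProduct, Matrix.of_apply]
    rw [hsum, div_eq_iff ht]
    linarith [hrel i]
  have hle := LinearMap.finrank_le_finrank_of_surjective hsurj
  simp at hle

lemma xiVec_ne_zero (A : Matrix (Fin (n + 2)) (Fin (n + 2)) ℤ) (hac : IsAlmostControllable A) :
    xiVec A ≠ 0 := by
  intro h
  obtain ⟨c, hc0, hc⟩ := exists_relation_of_xiVec_eq_zero A h
  have hker : Module.finrank ℚ (LinearMap.ker (walkMatrixQ A).mulVecLin) = 1 := by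
    have hrn := LinearMap.finrank_range_add_finrank_ker (walkMatrixQ A).mulVecLin
    have hr : Module.finrank ℚ (LinearMap.range (walkMatrixQ A).mulVecLin) = n + 1 := hac
    rw [hr, Module.finrank_fin_fun] at hrn
    omega
  have h1 : (Fin.snoc c 0 : Fin (n + 2) → ℚ) ∈ LinearMap.ker (walkMatrixQ A).mulVecLin := by
    rw [LinearMap.mem_ker]
    ext i
    simpa [Matrix.mulVec, dotProduct, Fin.sum_univ_castSucc] using hc i
  have h2 : (Fin.cons 0 c : Fin (n + 2) → ℚ) ∈ LinearMap.ker (walkMatrixQ A).mulVecLin := by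
    rw [LinearMap.mem_ker]
    ext i
    have hshift : ∑ j : Fin (n + 1), walkMatrixQ A i j.succ * c j = 0 := by
      simp_rw [walkMatrixQ_succ, Finset.sum_mul]
      rw [Finset.sum_comm]
      simp_rw [mul_assoc, ← Finset.mul_sum, hc]
      simp
    simpa [Matrix.mulVec, dotProduct, Fin.sum_univ_succ (n := n + 1)] using hshift
  have hne : (⟨_, h1⟩ : LinearMap.ker (walkMatrixQ A).mulVecLin) ≠ 0 := by
    intro h0
    apply hc0
    ext j
    have hj := congrFun (congrArg Subtype.val h0) j.castSucc
    simpa using hj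
  obtain ⟨t, ht⟩ := (finrank_eq_one_iff_of_nonzero' _ hne).mp hker ⟨_, h2⟩
  have ht' : ∀ j : Fin (n + 2),
      t * (Fin.snoc c 0 : Fin (n + 2) → ℚ) j = (Fin.cons 0 c : Fin (n + 2) → ℚ) j :=
    fun j => congrFun (congrArg Subtype.val ht) j
  apply hc0
  ext j
  induction j using Fin.reverseInduction with
  | last =>
    have hl := ht' (Fin.last (n + 1))
    rw [Fin.snoc_last, ← Fin.succ_last, Fin.cons_succ] at hl
    simpa using hl.symm
  | cast j ih =>
    have hl := ht' j.castSucc.succ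
    rw [Fin.cons_succ, ← Fin.castSucc_succ, Fin.snoc_castSucc, ih] at hl
    simpa using hl.symm

/-- for an almost controllable graph and `δ ∈ {0,1}`,
`det W_δ(G) = (−1)^δ·2^{1-⌊n/2⌋}·ξ(G)ᵀξ(G) ≠ 0`; in particular `W_δ(G)` has full rank. -/
theorem det_Wdelta_eq_and_ne_zero
    (n : ℕ) (A : Matrix (Fin (n + 2)) (Fin (n + 2)) ℤ)
    (hA : A.IsAdjMatrix) (hac : IsAlmostControllable A) :
    ∀ δ : Fin 2,
      (Wdelta A (δ : ℕ)).det =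
        (-1 : ℚ) ^ (δ : ℕ) * twoPow n * ((xiVec A ⬝ᵥ xiVec A : ℤ) : ℚ) ∧
      (Wdelta A (δ : ℕ)).det ≠ 0 ∧ (Wdelta A (δ : ℕ)).rank = n + 2 := by
  intro δ
  have hW : Wdelta A (δ : ℕ) = (walkMatrixQ A).updateCol (Fin.last (n + 1))
      (fun i => (-1 : ℚ) ^ (δ : ℕ) * twoPow n * (xiVec A i : ℚ)) := by
    ext i j
    simp [Wdelta, Matrix.updateCol_apply, walkMatrixQ, Fin.ext_iff]
  have hdet : (Wdelta A (δ : ℕ)).det =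
      (-1 : ℚ) ^ (δ : ℕ) * twoPow n * ((xiVec A ⬝ᵥ xiVec A : ℤ) : ℚ) := by
    rw [hW, det_updateCol_last]
    simp [dotProduct, Finset.mul_sum, mul_assoc]
  have hxi : xiVec A ⬝ᵥ xiVec A ≠ 0 :=
    fun h => xiVec_ne_zero A hac (dotProduct_self_eq_zero.mp h)
  have hne : (Wdelta A (δ : ℕ)).det ≠ 0 := by
    rw [hdet]
    refine mul_ne_zero (mul_ne_zero (pow_ne_zero _ (by norm_num)) ?_) (Int.cast_ne_zero.mpr hxi)
    exact zpow_ne_zero _ two_ne_zero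
  refine ⟨hdet, hne, ?_⟩
  rw [Matrix.rank_of_isUnit _ ((Matrix.isUnit_iff_isUnit_det _).mpr hne.isUnit), Fintype.card_fin]

end AlmostControllableGraphs
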